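/- Let A₀, A₁, A₂, A₃, A₄ ∈ ℝ and let h : ℝ → ℝ be smooth with h'(x) ≠ 0 for all x, satisfying for all x ∈ ℝ the linear-case second-order equation ((A₀h − A₁)h'³ + A₃ + A₄x)·h'' + (A₀h'⁴ + A₂h'² − A₄)·h' = 0. Then: (1) there exists A₅ ∈ ℝ such that for all x ∈ ℝ: 2(A₀h − A₁)(A₃ + A₄x)h'³ + (A₄h(2A₁ − A₀h) + A₂x(2A₃ + A₄x) + A₅)h'² − (A₃ + A₄x)² = 0; and (2) there exists A₆ ∈ ℝ such that for all x ∈ ℝ: (A₀h − A₁)²h'³ + ((A₀h − 2A₁)A₂h + A₀x(2A₃ + A₄x) + A₆)h' − 2(A₀h − A₁)(A₃ + A₄x) = 0. -/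

import Mathlib

/-!
The second-order equation becomes exact after multiplication by either of the integrating factors
`(A3 + A4 * x) / h' ^ 3` and `(A0 * h - A1) / h' ^ 2`. The two resulting first integrals are
functions of `x`, `h` and `h'` alone; each is constant along a solution, and clearing the
denominator `h' ^ 2`, respectively `h'`, gives the two first-order equations.
-/

section FirstIntegrals

variable {𝕜 : Type*}

section Field

variable [Field 𝕜] (A0 A1 A2 A3 A4 : 𝕜)

/-- The left-hand side of the linear-case (`μ = 0`) second-order equation, as a polynomial in the
values `x`, `u = h x`, `p = h' x` and `q = h'' x`. -/
def linearCaseODE (x u p q : 𝕜) : 𝕜 :=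
  ((A0 * u - A1) * p ^ 3 + A3 + A4 * x) * q + (A0 * p ^ 4 + A2 * p ^ 2 - A4) * p

/-- The first integral of the linear-case equation whose value is the constant `A5`, in terms of
`x`, `u = h x` and `p = h' x`. It is meaningful only for `p ≠ 0`. -/
def firstIntegralA5 (x u p : 𝕜) : 𝕜 :=
  (A3 + A4 * x) ^ 2 / p ^ 2 - 2 * (A0 * u - A1) * (A3 + A4 * x) * p
    - A4 * u * (2 * A1 - A0 * u) - A2 * x * (2 * A3 + A4 * x)

/-- The first integral of the linear-case equation whose value is the constant `A6`, in terms of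
`x`, `u = h x` and `p = h' x`. It is meaningful only for `p ≠ 0`. -/
def firstIntegralA6 (x u p : 𝕜) : 𝕜 :=
  2 * (A0 * u - A1) * (A3 + A4 * x) / p - (A0 * u - A1) ^ 2 * p ^ 2
    - (A0 * u - 2 * A1) * A2 * u - A0 * x * (2 * A3 + A4 * x)

variable {A0 A1 A2 A3 A4} {x u p c : 𝕜}

theorem firstIntegralA5_eq_iff (hp : p ≠ 0) :
    firstIntegralA5 A0 A1 A2 A3 A4 x u p = c ↔
      2 * (A0 * u - A1) * (A3 + A4 * x) * p ^ 3
        + (A4 * u * (2 * A1 - A0 * u) + A2 * x * (2 * A3 + A4 * x) + c) * p ^ 2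
        - (A3 + A4 * x) ^ 2 = 0 := by
  unfold firstIntegralA5
  field_simp
  constructor <;> intro h <;> linear_combination -h

theorem firstIntegralA6_eq_iff (hp : p ≠ 0) :
    firstIntegralA6 A0 A1 A2 A3 A4 x u p = c ↔
      (A0 * u - A1) ^ 2 * p ^ 3
        + ((A0 * u - 2 * A1) * A2 * u + A0 * x * (2 * A3 + A4 * x) + c) * p
        - 2 * (A0 * u - A1) * (A3 + A4 * x) = 0 := by
  unfold firstIntegralA6
  field_simp
  constructor <;> intro h <;> linear_combination -h

end Field

section Deriv

variable [NontriviallyNormedField 𝕜] {h p : 𝕜 → 𝕜} {x q : 𝕜}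

theorem hasDerivAt_const_add_const_mul (a b x : 𝕜) : HasDerivAt (fun t ↦ a + b * t) b x := by
  simpa using ((hasDerivAt_id x).const_mul b).const_add a

theorem hasDerivAt_firstIntegralA5 (A0 A1 A2 A3 A4 : 𝕜) (hh : HasDerivAt h (p x) x)
    (hp : HasDerivAt p q x) (hpx : p x ≠ 0) :
    HasDerivAt (fun t ↦ firstIntegralA5 A0 A1 A2 A3 A4 t (h t) (p t))
      (-2 * ((A3 + A4 * x) / p x ^ 3) * linearCaseODE A0 A1 A2 A3 A4 x (h x) (p x) q) x := by
  have hL := hasDerivAt_const_add_const_mul A3 A4 x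
  have hH := (hh.const_mul A0).sub_const A1
  have hquot := (hL.fun_pow 2).fun_div (hp.fun_pow 2) (pow_ne_zero 2 hpx)
  have hprod := ((hH.const_mul 2).fun_mul hL).fun_mul hp
  have hpot := (hh.const_mul A4).fun_mul ((hh.const_mul A0).const_sub (2 * A1))
  have hquad := ((hasDerivAt_id' x).const_mul A2).fun_mul
    (hasDerivAt_const_add_const_mul (2 * A3) A4 x)
  refine (((hquot.fun_sub hprod).fun_sub hpot).fun_sub hquad).congr_deriv ?_
  unfold linearCaseODE
  field_simp
  push_cast
  ring

theorem hasDerivAt_firstIntegralA6 (A0 A1 A2 A3 A4 : 𝕜) (hh : HasDerivAt h (p x) x)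
    (hp : HasDerivAt p q x) (hpx : p x ≠ 0) :
    HasDerivAt (fun t ↦ firstIntegralA6 A0 A1 A2 A3 A4 t (h t) (p t))
      (-2 * ((A0 * h x - A1) / p x ^ 2) * linearCaseODE A0 A1 A2 A3 A4 x (h x) (p x) q) x := by
  have hL := hasDerivAt_const_add_const_mul A3 A4 x
  have hH := (hh.const_mul A0).sub_const A1
  have hquot := ((hH.const_mul 2).fun_mul hL).fun_div hp hpx
  have hprod := (hH.fun_pow 2).fun_mul (hp.fun_pow 2)
  have hpot := (((hh.const_mul A0).sub_const (2 * A1)).mul_const A2).fun_mul hh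
  have hquad := ((hasDerivAt_id' x).const_mul A0).fun_mul
    (hasDerivAt_const_add_const_mul (2 * A3) A4 x)
  refine (((hquot.fun_sub hprod).fun_sub hpot).fun_sub hquad).congr_deriv ?_
  unfold linearCaseODE
  field_simp
  push_cast
  ring

end Deriv

end FirstIntegrals

theorem exists_forall_mem_eq_of_hasDerivAt_zero {𝕜 E : Type*} [RCLike 𝕜] [NormedAddCommGroup E]
    [NormedSpace 𝕜 E] {s : Set 𝕜} {f : 𝕜 → E} (hs : IsOpen s) (hs' : IsPreconnected s)
    (hf : ∀ x ∈ s, HasDerivAt f 0 x) : ∃ c, ∀ x ∈ s, f x = c :=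
  hs.exists_is_const_of_deriv_eq_zero hs'
    (fun x hx ↦ (hf x hx).differentiableAt.differentiableWithinAt) fun x hx ↦ (hf x hx).deriv

theorem stmt_14_general {𝕜 : Type*} [RCLike 𝕜] {s : Set 𝕜} (hs : IsOpen s)
    (hs' : IsPreconnected s) (A0 A1 A2 A3 A4 : 𝕜) (h : 𝕜 → 𝕜) (hh : DifferentiableOn 𝕜 h s)
    (hdh : DifferentiableOn 𝕜 (deriv h) s) (hhx : ∀ x ∈ s, deriv h x ≠ 0)
    (hode : ∀ x ∈ s,
      ((A0 * h x - A1) * (deriv h x) ^ 3 + A3 + A4 * x) * deriv (deriv h) x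
        + (A0 * (deriv h x) ^ 4 + A2 * (deriv h x) ^ 2 - A4) * deriv h x = 0) :
    (∃ A5 : 𝕜, ∀ x ∈ s,
      2 * (A0 * h x - A1) * (A3 + A4 * x) * (deriv h x) ^ 3
        + (A4 * h x * (2 * A1 - A0 * h x) + A2 * x * (2 * A3 + A4 * x) + A5)
            * (deriv h x) ^ 2
        - (A3 + A4 * x) ^ 2 = 0)
    ∧ (∃ A6 : 𝕜, ∀ x ∈ s,
      (A0 * h x - A1) ^ 2 * (deriv h x) ^ 3
        + ((A0 * h x - 2 * A1) * A2 * h x + A0 * x * (2 * A3 + A4 * x) + A6)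
            * deriv h x
        - 2 * (A0 * h x - A1) * (A3 + A4 * x) = 0) := by
  have hasDeriv_h (x) (hx : x ∈ s) : HasDerivAt h (deriv h x) x :=
    (hh.differentiableAt (hs.mem_nhds hx)).hasDerivAt
  have hasDeriv_dh (x) (hx : x ∈ s) : HasDerivAt (deriv h) (deriv (deriv h) x) x :=
    (hdh.differentiableAt (hs.mem_nhds hx)).hasDerivAt
  have hode' (x) (hx : x ∈ s) :
      linearCaseODE A0 A1 A2 A3 A4 x (h x) (deriv h x) (deriv (deriv h) x) = 0 := hode x hx
  constructor
  · obtain ⟨A5, hA5⟩ := exists_forall_mem_eq_of_hasDerivAt_zero hs hs' fun x hx ↦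
      (hasDerivAt_firstIntegralA5 A0 A1 A2 A3 A4 (hasDeriv_h x hx) (hasDeriv_dh x hx)
        (hhx x hx)).congr_deriv (by rw [hode' x hx, mul_zero])
    exact ⟨A5, fun x hx ↦ (firstIntegralA5_eq_iff (hhx x hx)).1 (hA5 x hx)⟩
  · obtain ⟨A6, hA6⟩ := exists_forall_mem_eq_of_hasDerivAt_zero hs hs' fun x hx ↦
      (hasDerivAt_firstIntegralA6 A0 A1 A2 A3 A4 (hasDeriv_h x hx) (hasDeriv_dh x hx)
        (hhx x hx)).congr_deriv (by rw [hode' x hx, mul_zero])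
    exact ⟨A6, fun x hx ↦ (firstIntegralA6_eq_iff (hhx x hx)).1 (hA6 x hx)⟩

theorem stmt_14 (A0 A1 A2 A3 A4 : ℝ) (h : ℝ → ℝ)
    (hh : ContDiff ℝ (⊤ : ℕ∞) h) (hhx : ∀ x, deriv h x ≠ 0)
    (hode : ∀ x : ℝ,
      ((A0 * h x - A1) * (deriv h x)^3 + A3 + A4 * x) * deriv (deriv h) x
        + (A0 * (deriv h x)^4 + A2 * (deriv h x)^2 - A4) * deriv h x = 0) :
    (∃ A5 : ℝ, ∀ x : ℝ,
      2 * (A0 * h x - A1) * (A3 + A4 * x) * (deriv h x)^3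
        + (A4 * h x * (2 * A1 - A0 * h x) + A2 * x * (2 * A3 + A4 * x) + A5)
            * (deriv h x)^2
        - (A3 + A4 * x)^2 = 0)
    ∧ (∃ A6 : ℝ, ∀ x : ℝ,
      (A0 * h x - A1)^2 * (deriv h x)^3
        + ((A0 * h x - 2 * A1) * A2 * h x + A0 * x * (2 * A3 + A4 * x) + A6)
            * deriv h x
        - 2 * (A0 * h x - A1) * (A3 + A4 * x) = 0) := by
  obtain ⟨hd, hdh⟩ := contDiff_infty_iff_deriv.1 hh
  simpa only [Set.mem_univ, forall_const] using
    stmt_14_general isOpen_univ isPreconnected_univ A0 A1 A2 A3 A4 h hd.differentiableOn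
      (hdh.differentiable (by simp)).differentiableOn (fun x _ ↦ hhx x) fun x _ ↦ hode x
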